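/- arXiv:math/0611796 — 3 statements merged into one kernel-verified Lean document; each statement's English description precedes it below -/
import Mathlib

section
/- Fix an integer r and let m = 2r+1. Consider the action of the unitary group U(2) on ℂ² given by g·v = (det g)^r (g v) (this is the underlying real 4-dimensional sphere-transitive representation [Σ¹⊗(A^m ⊕ A^{−m})] of U(2)). Then: (i) this action is transitive on the unit sphere {v ∈ ℂ² : ‖v‖ = 1}; and (ii) the stabilizer of the point (1,0) is exactly the circle subgroup {diag(e^{−irt}, e^{i(r+1)t}) : t ∈ ℝ} of U(2). -/
/-!
Transitivity already holds for the subgroup `SU(2)`, on which the twist `(det g)^r` is trivial: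
for a unit vector `v = (a, b)` the matrix `S(v)` with columns `(a, b)` and `(-b̄, ā)` lies in
`SU(2)` and sends `(1, 0)` to `v`, so `S(w) S(v)*` sends `v` to `w`.

For the stabilizer, put `d = det g`. If `g` fixes `(1, 0)`, its first column is `(d^{-r}, 0)`, and
unitarity then forces `g` to be diagonal, so its other diagonal entry is `d / d^{-r} = d^{r+1}`.
Since `|d| = 1`, one may write `d = e^{it}`. The converse is a direct computation, with
`det g = e^{it}`.
-/

open Matrix Complex

/-- The action of `U(2)` on `ℂ²` given by `g · v = (det g)^r • (g v)`; for `m = 2r+1` this is the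
real `4`-dimensional representation `[Σ¹ ⊗ (A^m ⊕ A^{-m})]` of `U(2)`. -/
noncomputable def actU2 (r : ℤ) (g : Matrix.unitaryGroup (Fin 2) ℂ)
    (v : EuclideanSpace ℂ (Fin 2)) : EuclideanSpace ℂ (Fin 2) :=
  (WithLp.equiv 2 (Fin 2 → ℂ)).symm
    (((g : Matrix (Fin 2) (Fin 2) ℂ).det ^ r) •
      (g : Matrix (Fin 2) (Fin 2) ℂ).mulVec ((WithLp.equiv 2 (Fin 2 → ℂ)) v))

lemma star_sum_of_norm_eq_one (v : EuclideanSpace ℂ (Fin 2)) (hv : ‖v‖ = 1) :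
    v 0 * star (v 0) + v 1 * star (v 1) = 1 := by
  have h := EuclideanSpace.norm_sq_eq v
  rw [hv, Fin.sum_univ_two] at h
  simp only [Complex.star_def, Complex.mul_conj, Complex.normSq_eq_norm_sq]
  exact_mod_cast (by linarith : ‖v 0‖ ^ 2 + ‖v 1‖ ^ 2 = 1)

lemma actU2_transitive (r : ℤ) (v w : EuclideanSpace ℂ (Fin 2)) (hv : ‖v‖ = 1) (hw : ‖w‖ = 1) :
    ∃ g : Matrix.unitaryGroup (Fin 2) ℂ, actU2 r g v = w := by
  have h1 := star_sum_of_norm_eq_one v hv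
  have h2 := star_sum_of_norm_eq_one w hw
  -- The matrix `M` is `S(w) S(v)*`, multiplied out.
  let M : Matrix (Fin 2) (Fin 2) ℂ :=
    !![w 0 * star (v 0) + star (w 1) * v 1, w 0 * star (v 1) - star (w 1) * v 0;
       w 1 * star (v 0) - star (w 0) * v 1, w 1 * star (v 1) + star (w 0) * v 0]
  have hdet : M.det = 1 := by
    simp only [M, Matrix.det_fin_two_of]
    linear_combination (w 0 * star (w 0) + w 1 * star (w 1)) * h1 + h2
  have hM : M ∈ Matrix.unitaryGroup (Fin 2) ℂ := by
    rw [Matrix.mem_unitaryGroup_iff]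
    ext i j
    fin_cases i <;> fin_cases j <;>
      simp [M, Matrix.mul_apply, Fin.sum_univ_two, Matrix.star_apply] <;>
      simp only [Complex.star_def] at h1 h2
    · linear_combination
        (w 0 * starRingEnd ℂ (w 0) + w 1 * starRingEnd ℂ (w 1)) * h1 + h2
    · ring
    · ring
    · linear_combination
        (w 0 * starRingEnd ℂ (w 0) + w 1 * starRingEnd ℂ (w 1)) * h1 + h2
  refine ⟨⟨M, hM⟩, ?_⟩
  ext i
  simp only [actU2, hdet, _root_.one_zpow, one_smul]
  fin_cases i <;> simp [M, dotProduct, Fin.sum_univ_two] <;>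
    simp only [Complex.star_def] at h1 h2
  · linear_combination w 0 * h1
  · linear_combination w 1 * h1

lemma actU2_fixes_iff (r : ℤ) (g : Matrix.unitaryGroup (Fin 2) ℂ) :
    actU2 r g (EuclideanSpace.single 0 1) = EuclideanSpace.single 0 1 ↔
      (g : Matrix (Fin 2) (Fin 2) ℂ).det ^ r * g 0 0 = 1 ∧
      (g : Matrix (Fin 2) (Fin 2) ℂ).det ^ r * g 1 0 = 0 := by
  constructor
  · intro h
    have h0 := congrArg (fun x : EuclideanSpace ℂ (Fin 2) => x 0) h
    have h1 := congrArg (fun x : EuclideanSpace ℂ (Fin 2) => x 1) h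
    simp only [actU2] at h0 h1
    exact ⟨by simpa using h0, by simpa using h1⟩
  · rintro ⟨h0, h1⟩
    ext i
    simp only [actU2]
    fin_cases i
    · simpa [Matrix.mulVec, dotProduct, Fin.sum_univ_two] using h0
    · simpa [Matrix.mulVec, dotProduct, Fin.sum_univ_two] using h1

lemma norm_det_unitary (g : Matrix.unitaryGroup (Fin 2) ℂ) :
    ‖(g : Matrix (Fin 2) (Fin 2) ℂ).det‖ = 1 :=
  CStarRing.norm_of_mem_unitary (Matrix.det_of_mem_unitary g.2)

/-- The representation `g · v = (det g)^r (g v)` of `U(2)` on `ℂ²` is transitive on the unit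
sphere, and the stabilizer of `(1,0)` is the circle subgroup
`{diag(e^{-irt}, e^{i(r+1)t}) : t ∈ ℝ}`. -/
theorem actU2_sphere_transitive_and_stabilizer (r : ℤ) :
    (∀ v w : EuclideanSpace ℂ (Fin 2), ‖v‖ = 1 → ‖w‖ = 1 →
      ∃ g : Matrix.unitaryGroup (Fin 2) ℂ, actU2 r g v = w) ∧
    (∀ g : Matrix.unitaryGroup (Fin 2) ℂ,
      actU2 r g (EuclideanSpace.single 0 1) = EuclideanSpace.single 0 1 ↔
        ∃ t : ℝ, (g : Matrix (Fin 2) (Fin 2) ℂ) =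
          Matrix.diagonal ![Complex.exp (-((r : ℂ) * (t : ℝ)) * Complex.I),
            Complex.exp (((r : ℂ) + 1) * (t : ℝ) * Complex.I)]) := by
  refine ⟨actU2_transitive r, fun g => ?_⟩
  rw [actU2_fixes_iff]
  constructor
  · rintro ⟨h0, h1⟩
    obtain ⟨t, ht⟩ := (Complex.norm_eq_one_iff _).1 (norm_det_unitary g)
    have hdr : (g : Matrix (Fin 2) (Fin 2) ℂ).det ^ r ≠ 0 := left_ne_zero_of_mul_eq_one h0
    have h10 : g 1 0 = 0 := (mul_eq_zero.1 h1).resolve_left hdr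
    have hu := Matrix.mem_unitaryGroup_iff.1 g.2
    have h11 : g 1 1 * star (g 1 1) = 1 := by
      simpa [Matrix.mul_apply, Fin.sum_univ_two, Matrix.star_apply, h10]
        using congrFun (congrFun hu 1) 1
    have h01 : g 0 1 = 0 := by
      have h : g 0 1 * star (g 1 1) = 0 := by
        simpa [Matrix.mul_apply, Fin.sum_univ_two, Matrix.star_apply, h10]
          using congrFun (congrFun hu 0) 1
      exact (mul_eq_zero.1 h).resolve_right (right_ne_zero_of_mul_eq_one h11)
    have hd : (g : Matrix (Fin 2) (Fin 2) ℂ).det = g 0 0 * g 1 1 := by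
      rw [Matrix.det_fin_two, h10, mul_zero, sub_zero]
    have hpow : (g : Matrix (Fin 2) (Fin 2) ℂ).det ^ r = Complex.exp ((r : ℂ) * t * I) := by
      rw [← ht, ← Complex.exp_int_mul, mul_assoc]
    have e00 : g 0 0 = Complex.exp (-((r : ℂ) * t) * I) := by
      rw [neg_mul, Complex.exp_neg, ← hpow]
      exact eq_inv_of_mul_eq_one_right h0
    have e11 : g 1 1 = Complex.exp (((r : ℂ) + 1) * t * I) := by
      rw [add_mul, add_mul, one_mul, Complex.exp_add, ht, ← hpow, hd, ← mul_assoc, ← hd, h0,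
        one_mul]
    refine ⟨t, ?_⟩
    ext i j
    fin_cases i <;> fin_cases j
    · simpa using e00
    · simpa using h01
    · simpa using h10
    · simpa using e11
  · rintro ⟨t, ht⟩
    rw [ht]
    have hd : (Matrix.diagonal ![Complex.exp (-((r : ℂ) * (t : ℝ)) * Complex.I),
        Complex.exp (((r : ℂ) + 1) * (t : ℝ) * Complex.I)]).det = Complex.exp (t * I) := by
      rw [Matrix.det_diagonal, Fin.prod_univ_two]
      simp only [Matrix.cons_val_zero, Matrix.cons_val_one]
      rw [← Complex.exp_add]
      congr 1
      ring
    rw [hd, ← Complex.exp_int_mul]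
    refine ⟨?_, by simp⟩
    rw [Matrix.diagonal_apply_eq, Matrix.cons_val_zero, ← Complex.exp_add, ← Complex.exp_zero]
    congr 1
    ring
end

section
/- Let p, q be integers with (p,q) ≠ (0,0), and let h = gcd(p,q). Let φ : circle × circle → circle be the continuous group homomorphism φ(z,w) = z^p · w^q. Then the kernel of φ is isomorphic, as a topological group, to circle × ZMod h. (This is the statement that the generic stabilizer of the 2-torus representation A^p ⊗ A^q is U(1) × ℤ_h.) -/
/-!
Write `p = h a`, `q = h b` with `h = gcd(p, q)` and choose Bézout coefficients `u a + v b = 1`.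
The unimodular change of coordinates `(t, c) ↦ (t^b c^u, t^(-a) c^v)` of the 2-torus has inverse
`(z, w) ↦ (z^v w^(-u), z^a w^b)`, and in the new coordinates `z^p w^q` is `c^h`. Hence it carries
`circle × μ_h` onto the kernel, and `μ_h` is identified with `ZMod h` through `ZMod.toCircle`.
A continuous bijection from a compact space to a Hausdorff space is a homeomorphism, which yields
continuity of the inverse.
-/

/-- The homomorphism `circle × circle → circle`, `(z, w) ↦ z^p · w^q`. -/
noncomputable def phiCircle (p q : ℤ) : Circle × Circle →* Circle where
  toFun zw := zw.1 ^ p * zw.2 ^ q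
  map_one' := by simp
  map_mul' x y := by
    simp only [Prod.fst_mul, Prod.snd_mul, mul_zpow]
    exact mul_mul_mul_comm _ _ _ _

section Bezout

variable {A : Type*} [AddCommGroup A] {a b u v : ℤ}

lemma bezout_add_snd (h : u * a + v * b = 1) (t c : A) :
    a • (b • t + u • c) + b • (-a • t + v • c) = c := by
  linear_combination (norm := module) h • c

lemma bezout_add_fst (h : u * a + v * b = 1) (t c : A) :
    v • (b • t + u • c) + -u • (-a • t + v • c) = t := by
  linear_combination (norm := module) h • t

lemma bezout_add_left (h : u * a + v * b = 1) (z w : A) :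
    b • (v • z + -u • w) + u • (a • z + b • w) = z := by
  linear_combination (norm := module) h • z

lemma bezout_add_right (h : u * a + v * b = 1) (z w : A) :
    -a • (v • z + -u • w) + v • (a • z + b • w) = w := by
  linear_combination (norm := module) h • w

end Bezout

lemma exists_toCircle_eq {n : ℕ} [NeZero n] {c : Circle} (hc : c ^ n = 1) :
    ∃ j : ZMod n, ZMod.toCircle j = c := by
  obtain ⟨j, hj⟩ := (bijective_rootsOfUnityAddChar n).surjective
    (rootsOfUnity.mkOfPowEq c hc)
  refine ⟨j, ?_⟩
  have := congrArg (fun x : rootsOfUnity n Circle => ((x : Circleˣ) : Circle)) hj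
  simpa using this

lemma toCircle_pow_eq_one {n : ℕ} [NeZero n] (j : ZMod n) : ZMod.toCircle j ^ n = 1 := by
  rw [← AddChar.map_nsmul_eq_pow]
  simp

/-- The parametrization `(t, j) ↦ (t^b ζ^u, t^(-a) ζ^v)`, with `ζ = exp(2πij/n)`, of the kernel
of `(z, w) ↦ z^p w^q` where `p = n a` and `q = n b`. -/
noncomputable def kerParam {n : ℕ} [NeZero n] {p q a b u v : ℤ} (hp : p = n * a) (hq : q = n * b)
    (h : u * a + v * b = 1) : Circle × Multiplicative (ZMod n) →* (phiCircle p q).ker where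
  toFun x := ⟨(x.1 ^ b * ZMod.toCircle x.2.toAdd ^ u, x.1 ^ (-a) * ZMod.toCircle x.2.toAdd ^ v), by
    have key := bezout_add_snd (A := Additive Circle) h x.1 (ZMod.toCircle x.2.toAdd)
    change (x.1 ^ b * ZMod.toCircle x.2.toAdd ^ u) ^ a *
      (x.1 ^ (-a) * ZMod.toCircle x.2.toAdd ^ v) ^ b = ZMod.toCircle x.2.toAdd at key
    change (x.1 ^ b * ZMod.toCircle x.2.toAdd ^ u) ^ p *
      (x.1 ^ (-a) * ZMod.toCircle x.2.toAdd ^ v) ^ q = 1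
    rw [hp, hq, mul_comm _ a, mul_comm _ b, zpow_mul, zpow_mul, ← mul_zpow, key, zpow_natCast,
      toCircle_pow_eq_one]⟩
  map_one' := by ext <;> simp
  map_mul' x y := by
    apply Subtype.ext
    apply Prod.ext <;>
    · simp only [Prod.fst_mul, Prod.snd_mul, toAdd_mul, AddChar.map_add_eq_mul, mul_zpow,
        Subgroup.coe_mul]
      exact mul_mul_mul_comm _ _ _ _

lemma kerParam_bijective {n : ℕ} [NeZero n] {p q a b u v : ℤ} (hp : p = n * a) (hq : q = n * b)
    (h : u * a + v * b = 1) : Function.Bijective (kerParam hp hq h) := by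
  constructor
  · intro x y hxy
    have h1 : (x.1 ^ b * ZMod.toCircle x.2.toAdd ^ u) = (y.1 ^ b * ZMod.toCircle y.2.toAdd ^ u) :=
      congrArg (fun k => k.1.1) hxy
    have h2 : (x.1 ^ (-a) * ZMod.toCircle x.2.toAdd ^ v) =
        (y.1 ^ (-a) * ZMod.toCircle y.2.toAdd ^ v) := congrArg (fun k => k.1.2) hxy
    have fst (x : Circle × Multiplicative (ZMod n)) :
        (x.1 ^ b * ZMod.toCircle x.2.toAdd ^ u) ^ v *
        (x.1 ^ (-a) * ZMod.toCircle x.2.toAdd ^ v) ^ (-u) = x.1 :=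
      bezout_add_fst (A := Additive Circle) h x.1 (ZMod.toCircle x.2.toAdd)
    have snd (x : Circle × Multiplicative (ZMod n)) :
        (x.1 ^ b * ZMod.toCircle x.2.toAdd ^ u) ^ a *
        (x.1 ^ (-a) * ZMod.toCircle x.2.toAdd ^ v) ^ b = ZMod.toCircle x.2.toAdd :=
      bezout_add_snd (A := Additive Circle) h x.1 (ZMod.toCircle x.2.toAdd)
    refine Prod.ext ?_ (Multiplicative.toAdd.injective (ZMod.injective_toCircle ?_))
    · rw [← fst x, ← fst y, h1, h2]
    · rw [← snd x, ← snd y, h1, h2]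
  · rintro ⟨⟨z, w⟩, hzw⟩
    have hzw' : z ^ p * w ^ q = 1 := hzw
    have hc : (z ^ a * w ^ b) ^ n = 1 := by
      rw [← zpow_natCast, mul_zpow, ← zpow_mul, ← zpow_mul, mul_comm a, mul_comm b, ← hp, ← hq,
        hzw']
    obtain ⟨j, hj⟩ := exists_toCircle_eq hc
    refine ⟨(z ^ v * w ^ (-u), Multiplicative.ofAdd j), Subtype.ext (Prod.ext ?_ ?_)⟩
    · change (z ^ v * w ^ (-u)) ^ b * ZMod.toCircle j ^ u = z
      rw [hj]
      exact bezout_add_left (A := Additive Circle) h z w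
    · change (z ^ v * w ^ (-u)) ^ (-a) * ZMod.toCircle j ^ v = w
      rw [hj]
      exact bezout_add_right (A := Additive Circle) h z w

/-- The generic stabilizer of the `2`-torus representation `A^p ⊗ A^q` is `U(1) × ℤ_h` with
`h = gcd(p,q)`: the kernel of `(z,w) ↦ z^p w^q` is topologically isomorphic to
`circle × ZMod (gcd p q)`. -/
theorem ker_phiCircle_iso (p q : ℤ) (hpq : (p, q) ≠ (0, 0)) :
    letI : TopologicalSpace (Multiplicative (ZMod (Int.gcd p q))) := ⊥
    ∃ e : (phiCircle p q).ker ≃* Circle × Multiplicative (ZMod (Int.gcd p q)),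
      Continuous e ∧ Continuous e.symm := by
  let _ : TopologicalSpace (Multiplicative (ZMod (Int.gcd p q))) := ⊥
  have : DiscreteTopology (Multiplicative (ZMod (Int.gcd p q))) := ⟨rfl⟩
  have hn : Int.gcd p q ≠ 0 := fun h0 => hpq (by
    rw [Int.gcd_eq_zero_iff] at h0
    exact Prod.ext h0.1 h0.2)
  have : NeZero (Int.gcd p q) := ⟨hn⟩
  have : Finite (Multiplicative (ZMod (Int.gcd p q))) :=
    inferInstanceAs (Finite (ZMod (Int.gcd p q)))
  obtain ⟨a, hp⟩ := Int.gcd_dvd_left p q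
  obtain ⟨b, hq⟩ := Int.gcd_dvd_right p q
  have hbez : Int.gcdA p q * a + Int.gcdB p q * b = 1 := by
    have h0 : (Int.gcd p q : ℤ) ≠ 0 := by exact_mod_cast hn
    apply mul_left_cancel₀ h0
    linear_combination -Int.gcd_eq_gcd_ab p q - Int.gcdA p q * hp - Int.gcdB p q * hq
  let f := MulEquiv.ofBijective (kerParam hp hq hbez) (kerParam_bijective hp hq hbez)
  have hf : Continuous f := by
    have hζ : Continuous fun x : Circle × Multiplicative (ZMod (Int.gcd p q)) =>
        ZMod.toCircle x.2.toAdd :=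
      (continuous_of_discreteTopology (f := fun j : Multiplicative (ZMod (Int.gcd p q)) =>
        ZMod.toCircle j.toAdd)).comp continuous_snd
    exact Continuous.subtype_mk
      (((continuous_fst.zpow _).mul (hζ.zpow _)).prodMk
        ((continuous_fst.zpow _).mul (hζ.zpow _))) _
  exact ⟨f.symm, hf.continuous_symm_of_equiv_compact_to_t2 (f := f.toEquiv), hf⟩
end

section
/- Let n be a natural number and let A be an invertible n×n complex matrix. Then A·Ā = 1 if and only if there exists an invertible n×n complex matrix B with A = B·(B̄)⁻¹. In other words, the preimage Γ⁻¹(I) of the identity under the map Γ(A) = A·Ā on GL(n,ℂ) coincides with the consimilarity orbit {B·B̄⁻¹ : B ∈ GL(n,ℂ)} of the identity. -/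
open Matrix

/-!
If `A = B * B̄⁻¹`, then `A * B̄ = B`, hence also `Ā * B = B̄`, so `A * Ā * B = B` and `B` cancels.

Conversely, suppose `A * Ā = 1`. For every complex number `c` the matrix `B = c • 1 + c̄ • A`
satisfies `A * B̄ = B`, so it is enough to choose `c` with `B` invertible. Taking `c = t + i` with
`t` real gives `B = t • (1 + A) + i • (1 - A)`, whose determinant is a polynomial in `t`. At `t = i`
its value is `(2 * i) ^ n ≠ 0`, so it has finitely many roots and some real `t` is not a root.
-/

/-- The pencil `t • (1 + A) + i • (1 - A)` is invertible for some real `t`. -/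
lemma exists_real_isUnit_pencil (n : ℕ) (A : Matrix (Fin n) (Fin n) ℂ) :
    ∃ t : ℝ, IsUnit ((t : ℂ) • (1 + A) + Complex.I • (1 - A)) := by
  let M : Matrix (Fin n) (Fin n) (Polynomial ℂ) :=
    Matrix.of fun i j =>
      Polynomial.X * Polynomial.C ((1 + A) i j) + Polynomial.C ((Complex.I • (1 - A)) i j)
  have heval (z : ℂ) : M.det.eval z = (z • (1 + A) + Complex.I • (1 - A)).det := by
    rw [← Polynomial.coe_evalRingHom, RingHom.map_det]
    congr 1
    ext i j
    simp [M]
    ring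
  have hM : M.det ≠ 0 := by
    intro h
    have h1 := heval Complex.I
    have h2 : Complex.I • (1 + A) + Complex.I • (1 - A) = (2 * Complex.I) • 1 := by
      module
    rw [h, h2, Matrix.det_smul] at h1
    simp only [Polynomial.eval_zero, Fintype.card_fin, Matrix.det_one, mul_one] at h1
    exact pow_ne_zero n (mul_ne_zero two_ne_zero Complex.I_ne_zero) h1.symm
  by_contra! hcon
  apply hM
  apply Polynomial.eq_zero_of_infinite_isRoot
  refine (Set.infinite_range_of_injective Complex.ofReal_injective).mono ?_
  rintro _ ⟨t, rfl⟩
  have ht := hcon t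
  rw [Matrix.isUnit_iff_isUnit_det, isUnit_iff_ne_zero, not_not] at ht
  exact (heval t).trans ht

/-- For an invertible complex matrix `A`, `A·Ā = 1` iff `A = B·(B̄)⁻¹` for some invertible `B`:
the preimage of the identity under `Γ(A) = A·Ā` is the consimilarity orbit of the identity. -/
theorem consimilarity_orbit_of_identity (n : ℕ) (A : Matrix (Fin n) (Fin n) ℂ)
    (hA : IsUnit A) :
    A * A.map (starRingEnd ℂ) = 1 ↔
      ∃ B : Matrix (Fin n) (Fin n) ℂ, IsUnit B ∧ A = B * (B.map (starRingEnd ℂ))⁻¹ := by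
  have hconj {B : Matrix (Fin n) (Fin n) ℂ} (hB : IsUnit B) :
      IsUnit (B.map (starRingEnd ℂ)).det :=
    (Matrix.isUnit_iff_isUnit_det _).1 (hB.map (starRingEnd ℂ).mapMatrix)
  constructor
  · intro h
    obtain ⟨t, ht⟩ := exists_real_isUnit_pencil n A
    refine ⟨_, ht, ?_⟩
    have hmap : ((t : ℂ) • (1 + A) + Complex.I • (1 - A)).map (starRingEnd ℂ) =
        (t : ℂ) • (1 + A.map (starRingEnd ℂ)) - Complex.I • (1 - A.map (starRingEnd ℂ)) := by
      ext i j
      by_cases hij : i = j <;> simp [hij] <;> ring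
    have hfix : A * ((t : ℂ) • (1 + A) + Complex.I • (1 - A)).map (starRingEnd ℂ) =
        (t : ℂ) • (1 + A) + Complex.I • (1 - A) := by
      rw [hmap, mul_sub, mul_smul_comm, mul_smul_comm, mul_add, mul_sub, h, mul_one]
      module
    exact (Matrix.mul_nonsing_inv_cancel_right _ A (hconj ht)).symm.trans
      (congrArg (· * _) hfix)
  · rintro ⟨B, hB, h⟩
    have h1 : A * B.map (starRingEnd ℂ) = B := by
      rw [h, Matrix.nonsing_inv_mul_cancel_right _ _ (hconj hB)]
    have h2 : A.map (starRingEnd ℂ) * B = B.map (starRingEnd ℂ) := by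
      have h3 := congrArg (fun M => M.map (starRingEnd ℂ)) h1
      simp only [Matrix.map_mul] at h3
      convert h3 using 2
      ext i j
      simp
    apply hB.mul_right_cancel
    rw [mul_assoc, h2, h1, one_mul]
end
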